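/- Let N ≥ 2, α > 1 and p > 0. Set A = N − 2 + 4/(α+1), c* = [ (2α/(α+1)) · (N − 2 + 2/(α+1)) ]^{−1/(α+1)}, C = p/c*, and g(φ) = (2/(α+1)) · (N − 2 + 2/(α+1)) · ( φ − φ^{−α} ) for φ > 0. Then there exists exactly one positive C² function φ : ℝ → ℝ satisfying φ''(t) − A·φ'(t) + g(φ(t)) + C·e^{−(2α/(α+1))t} = 0 for all t ∈ ℝ together with 0 < liminf_{t→∞} φ(t) ≤ limsup_{t→∞} φ(t) < ∞. -/

import Mathlib

open Set Filter

noncomputable section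

open scoped Topology NNReal

/-- Clamp of a real number to `[-R, R]`. -/
def clampR (R x : ℝ) : ℝ := max (-R) (min R x)

lemma clampR_abs_le {R : ℝ} (hR : 0 ≤ R) (x : ℝ) : |clampR R x| ≤ R := by
  unfold clampR
  rw [abs_le]
  exact ⟨le_max_left _ _, max_le (by linarith) (min_le_left _ _)⟩

lemma clampR_abs_le_abs {R : ℝ} (hR : 0 ≤ R) (x : ℝ) : |clampR R x| ≤ |x| := by
  unfold clampR
  rw [abs_le]
  constructor
  · exact le_max_of_le_right (le_min (by linarith [abs_nonneg x]) (neg_abs_le x))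
  · exact max_le (by linarith [abs_nonneg x]) ((min_le_right _ _).trans (le_abs_self x))

lemma clampR_eq {R x : ℝ} (h : |x| ≤ R) : clampR R x = x := by
  unfold clampR
  rw [abs_le] at h
  rw [min_eq_right h.2, max_eq_right h.1]

lemma clampR_lip (R x y : ℝ) : |clampR R x - clampR R y| ≤ |x - y| := by
  unfold clampR
  calc |max (-R) (min R x) - max (-R) (min R y)| ≤ |min R x - min R y| := by
        have := abs_max_sub_max_le_abs (min R x) (min R y) (-R)
        rwa [max_comm (-R), max_comm (-R)]
    _ ≤ |x - y| := by
        have := abs_min_sub_min_le_max R x R y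
        simpa using this

/-- Global existence for globally Lipschitz fields on the plane. -/
lemma exists_sol_of_lip (F : ℝ → ℝ × ℝ → ℝ × ℝ) (L : ℝ≥0) (a b : ℝ) (hab : a ≤ b)
    (hL : ∀ t, LipschitzWith L (F t)) (hc : ∀ y, Continuous (fun t => F t y)) (y0 : ℝ × ℝ) :
    ∃ y : ℝ → ℝ × ℝ, y a = y0 ∧
      ∀ t ∈ Icc a b, HasDerivWithinAt y (F t (y t)) (Icc a b) t := by
  obtain ⟨M, hM⟩ : ∃ M, ∀ t ∈ Icc a b, ‖F t 0‖ ≤ M :=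
    isCompact_Icc.exists_bound_of_continuousOn (hc 0).continuousOn
  have hM0 : 0 ≤ M := (norm_nonneg _).trans (hM a ⟨le_rfl, hab⟩)
  have hlin : ∀ t ∈ Icc a b, ∀ y, ‖F t y‖ ≤ L * ‖y‖ + M := by
    intro t ht y
    have h1 := (hL t).dist_le_mul y 0
    rw [dist_eq_norm, dist_zero_right] at h1
    have h2 := norm_sub_norm_le (F t y) (F t 0)
    linarith [hM t ht]
  set R : ℝ := gronwallBound ‖y0‖ L M (b - a) with hRdef
  have hR : 0 ≤ R := by
    have := gronwallBound_mono (norm_nonneg y0) hM0 L.2 (sub_nonneg.2 hab)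
    rw [gronwallBound_x0] at this
    exact (norm_nonneg _).trans this
  let P : ℝ × ℝ → ℝ × ℝ := fun y => (clampR R y.1, clampR R y.2)
  have hPlip : LipschitzWith 1 P := by
    refine LipschitzWith.of_dist_le_mul fun x y => ?_
    simp only [NNReal.coe_one, one_mul, Prod.dist_eq, Real.dist_eq, P]
    exact max_le_max (clampR_lip R _ _) (clampR_lip R _ _)
  have hPR : ∀ y, ‖P y‖ ≤ R := fun y => by
    simp only [P, Prod.norm_def, Real.norm_eq_abs]
    exact max_le (clampR_abs_le hR _) (clampR_abs_le hR _)
  have hPy : ∀ y, ‖P y‖ ≤ ‖y‖ := fun y => by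
    simp only [P, Prod.norm_def, Real.norm_eq_abs]
    exact max_le_max (clampR_abs_le_abs hR _) (clampR_abs_le_abs hR _)
  have hPeq : ∀ y, ‖y‖ ≤ R → P y = y := fun y hy => by
    simp only [Prod.norm_def, Real.norm_eq_abs] at hy
    simp only [P]
    rw [clampR_eq ((le_max_left _ _).trans hy), clampR_eq ((le_max_right _ _).trans hy)]
  have hB0 : 0 ≤ L * R + M := by positivity
  let B : ℝ≥0 := ⟨L * R + M, hB0⟩
  have hpl : IsPicardLindelof (fun t y => F t (P y)) (tmin := a) (tmax := b) ⟨a, le_rfl, hab⟩ y0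
      (B * ⟨b - a, sub_nonneg.2 hab⟩) 0 B L := by
    refine ⟨?_, ?_, ?_, ?_⟩
    · intro t _
      have := (hL t).comp hPlip
      rw [mul_one] at this
      exact this.lipschitzOnWith
    · intro x _
      exact (hc (P x)).continuousOn
    · intro t ht x _
      refine (hlin t ht (P x)).trans ?_
      show L * ‖P x‖ + M ≤ L * R + M
      have := mul_le_mul_of_nonneg_left (hPR x) L.2
      have e : (L:ℝ) = L.1 := rfl
      rw [e]; linarith
    · simp [hab]
      exact (NNReal.coe_mul B ⟨b - a, sub_nonneg.2 hab⟩).ge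
  obtain ⟨y, hy0, hy⟩ := hpl.exists_eq_forall_mem_Icc_hasDerivWithinAt₀
  refine ⟨y, hy0, fun t ht => ?_⟩
  have hbd : ∀ t ∈ Icc a b, ‖y t‖ ≤ R := by
    intro t ht
    have := norm_le_gronwallBound_of_norm_deriv_right_le (f := y) (f' := fun t => F t (P (y t)))
      (δ := ‖y0‖) (K := L) (ε := M) (a := a) (b := b)
      (fun t ht => (hy t ht).continuousWithinAt)
      (fun t ht => by
        have h := (hy t ⟨ht.1, ht.2.le⟩)
        refine h.mono_of_mem_nhdsWithin ?_
        exact Icc_mem_nhdsGE_of_mem ht)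
      (by rw [show y a = y0 from hy0])
      (fun t ht => (hlin t ⟨ht.1, ht.2.le⟩ _).trans (by
        have := mul_le_mul_of_nonneg_left (hPy (y t)) L.2
        have e : (L:ℝ) = L.1 := rfl
        rw [e]; linarith)) t ht
    refine this.trans ?_
    exact gronwallBound_mono (norm_nonneg y0) hM0 L.2 (by linarith [ht.2])
  have := hy t ht
  simp only [hPeq _ (hbd t ht)] at this
  exact this

/-- Monotonicity from the sign of the derivative, in a convenient form. -/
lemma anti_of_hasDeriv {a b : ℝ} {V V' : ℝ → ℝ} (hc : ContinuousOn V (Icc a b))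
    (hd : ∀ t ∈ Ioo a b, HasDerivAt V (V' t) t) (h : ∀ t ∈ Ioo a b, V' t ≤ 0) :
    AntitoneOn V (Icc a b) := by
  refine antitoneOn_of_deriv_nonpos (convex_Icc a b) hc ?_ ?_
  · rw [interior_Icc]
    exact fun t ht => (hd t ht).differentiableAt.differentiableWithinAt
  · rw [interior_Icc]
    intro t ht
    rw [(hd t ht).deriv]; exact h t ht

lemma gron_simple {a b κ : ℝ} {V V' : ℝ → ℝ} (hc : ContinuousOn V (Icc a b))
    (hd : ∀ t ∈ Ioo a b, HasDerivAt V (V' t) t) (h : ∀ t ∈ Ioo a b, V' t ≤ κ * V t) :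
    ∀ t ∈ Icc a b, V t ≤ Real.exp (κ * (t - a)) * V a := by
  intro t ht
  have hab : a ≤ b := ht.1.trans ht.2
  have hanti : AntitoneOn (fun t => V t * Real.exp (-κ * t)) (Icc a b) := by
    refine anti_of_hasDeriv (V' := fun t => V' t * Real.exp (-κ * t)
      + V t * (Real.exp (-κ * t) * (-κ))) (hc.mul (by fun_prop)) ?_ ?_
    · intro t ht
      refine (hd t ht).mul ?_
      have : HasDerivAt (fun t : ℝ => -κ * t) (-κ) t := by
        simpa using (hasDerivAt_id t).const_mul (-κ)
      exact this.exp
    · intro t ht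
      have := mul_le_mul_of_nonneg_right (h t ht) (Real.exp_pos (-κ * t)).le
      linarith
  have h1 := hanti ⟨le_rfl, hab⟩ ht ht.1
  simp only at h1
  have h2 := mul_le_mul_of_nonneg_right h1 (Real.exp_pos (κ * t)).le
  rw [mul_assoc, mul_assoc, ← Real.exp_add, ← Real.exp_add] at h2
  have e1 : -κ * t + κ * t = 0 := by ring
  have e2 : -κ * a + κ * t = κ * (t - a) := by ring
  rw [e1, e2, Real.exp_zero, mul_one] at h2
  linarith

/-- The nonlinearity `g`. -/
def gK (K α x : ℝ) : ℝ := K * (x - x ^ (-α))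

/-- Its primitive vanishing at `1`. -/
def G0 (K α x : ℝ) : ℝ := K * ((x ^ 2 - 1) / 2 + (x ^ (1 - α) - 1) / (α - 1))

lemma G0_one (K α : ℝ) : G0 K α 1 = 0 := by simp [G0]

lemma G0_hasDerivAt {K α x : ℝ} (hα : 1 < α) (hx : 0 < x) :
    HasDerivAt (G0 K α) (gK K α x) x := by
  have h1 : HasDerivAt (fun x : ℝ => x ^ (1 - α)) ((1 - α) * x ^ (1 - α - 1)) x :=
    Real.hasDerivAt_rpow_const (Or.inl hx.ne')
  have h2 : HasDerivAt (fun x : ℝ => x ^ 2) (2 * x) x := by simpa using hasDerivAt_pow 2 x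
  have h3 := (((h2.sub_const 1).div_const 2).add ((h1.sub_const 1).div_const (α - 1))).const_mul K
  refine h3.congr_deriv ?_
  have e : 1 - α - 1 = -α := by ring
  have h0 : α - 1 ≠ 0 := by linarith
  rw [gK, e]
  field_simp
  ring

lemma rpow_tangent {α x : ℝ} (hα : 1 < α) (hx : 0 < x) :
    1 + (1 - α) * (x - 1) ≤ x ^ (1 - α) := by
  rw [Real.rpow_def_of_pos hx]
  have h1 := Real.add_one_le_exp (Real.log x * (1 - α))
  have h2 := Real.log_le_sub_one_of_pos hx
  nlinarith

lemma G0_ge {K α x : ℝ} (hK : 0 < K) (hα : 1 < α) (hx : 0 < x) :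
    K / 2 * (x - 1) ^ 2 ≤ G0 K α x := by
  have h := rpow_tangent hα hx
  have h0 : 0 < α - 1 := by linarith
  have h1 : -(x - 1) ≤ (x ^ (1 - α) - 1) / (α - 1) := by
    rw [le_div_iff₀ h0]; nlinarith
  have := mul_le_mul_of_nonneg_left h1 hK.le
  unfold G0
  nlinarith

lemma G0_le {K α x : ℝ} (hK : 0 < K) (hα : 1 < α) (hx : 0 < x) :
    G0 K α x ≤ gK K α x * (x - 1) := by
  have h := rpow_tangent hα (inv_pos.2 hx)
  have h0 : 0 < α - 1 := by linarith
  have e1 : (x⁻¹) ^ (1 - α) = (x ^ (1 - α))⁻¹ := Real.inv_rpow hx.le _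
  have hp : 0 < x ^ (1 - α) := Real.rpow_pos_of_pos hx _
  have e2 : x ^ (-α) = x ^ (1 - α) * x⁻¹ := by
    rw [← Real.rpow_neg_one x, ← Real.rpow_add hx]; congr 1; ring
  have e3 : x ^ (-α) * x = x ^ (1 - α) := by rw [e2]; field_simp
  rw [e1] at h
  have h2 := mul_le_mul_of_nonneg_left h hp.le
  rw [mul_inv_cancel₀ hp.ne'] at h2
  have h3 : x ^ (1 - α) + (1 - α) * (x ^ (-α) - x ^ (1 - α)) ≤ 1 := by rw [e2]; linarith
  have h4 : (x ^ (1 - α) - 1) / (α - 1) ≤ x ^ (-α) - x ^ (1 - α) := by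
    rw [div_le_iff₀ h0]; linarith
  have h5 : (x ^ 2 - 1) / 2 + (x ^ (1 - α) - 1) / (α - 1) ≤ (x - x ^ (-α)) * (x - 1) := by
    nlinarith [sq_nonneg (x - 1)]
  unfold G0 gK
  rw [mul_assoc]
  exact mul_le_mul_of_nonneg_left h5 hK.le

lemma gK_mono {K α x : ℝ} (hK : 0 < K) (hα : 1 < α) (hx : 0 < x) :
    K * (x - 1) ^ 2 ≤ gK K α x * (x - 1) := by
  have h5 : 0 ≤ (1 - x ^ (-α)) * (x - 1) := by
    rcases le_total 1 x with h | h
    · have : x ^ (-α) ≤ 1 := Real.rpow_le_one_of_one_le_of_nonpos h (by linarith)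
      exact mul_nonneg (by linarith) (by linarith)
    · have : 1 ≤ x ^ (-α) := Real.one_le_rpow_of_pos_of_le_one_of_nonpos hx h (by linarith)
      exact mul_nonneg_of_nonpos_of_nonpos (by linarith) (by linarith)
  unfold gK
  nlinarith [mul_nonneg hK.le h5]

lemma G0_big {K α : ℝ} (hK : 0 < K) (hα : 1 < α) (B : ℝ) :
    ∃ μ : ℝ, 0 < μ ∧ μ < 1 ∧ ∀ x, 0 < x → x ≤ μ → B < G0 K α x := by
  have h0 : 0 < α - 1 := by linarith
  have ht : Tendsto (fun x : ℝ => x ^ (1 - α)) (𝓝[>] 0) atTop :=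
    tendsto_rpow_neg_nhdsGT_zero (by linarith)
  have h1 := ht.eventually_gt_atTop ((B / K + 1 / 2) * (α - 1) + 1)
  rw [eventually_nhdsWithin_iff] at h1
  obtain ⟨ε, hε, h2⟩ := Metric.eventually_nhds_iff.1 h1
  refine ⟨min (ε / 2) (1 / 2), by positivity, ?_, ?_⟩
  · exact (min_le_right _ _).trans_lt (by norm_num)
  · intro x hx hxm
    have h3 : x < ε := by have := hxm.trans (min_le_left _ _); linarith
    have h4 := h2 (y := x) (by rw [Real.dist_eq, sub_zero, abs_of_pos hx]; exact h3) hx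
    have h5 : B / K + 1 / 2 < (x ^ (1 - α) - 1) / (α - 1) := by
      rw [lt_div_iff₀ h0]; linarith
    have h6 : B / K < (x ^ 2 - 1) / 2 + (x ^ (1 - α) - 1) / (α - 1) := by
      nlinarith [sq_nonneg x]
    rw [div_lt_iff₀ hK] at h6
    unfold G0; linarith

lemma gK_hasStrictDerivAt {K α x : ℝ} (hx : 0 < x) :
    HasStrictDerivAt (gK K α) (K * (1 + α * x ^ (-α - 1))) x := by
  have h1 : HasStrictDerivAt (fun x : ℝ => x ^ (-α)) ((-α) * x ^ (-α - 1)) x :=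
    Real.hasStrictDerivAt_rpow_const (Or.inl hx.ne')
  have h2 := ((hasStrictDerivAt_id x).sub h1).const_mul K
  refine h2.congr_deriv ?_
  ring

lemma gK_lip {K α μ : ℝ} (hK : 0 < K) (hα : 1 < α) (hμ : 0 < μ) :
    ∃ L : ℝ, 0 ≤ L ∧ ∀ x y, μ ≤ x → μ ≤ y → |gK K α x - gK K α y| ≤ L * |x - y| := by
  refine ⟨K * (1 + α * μ ^ (-α - 1)), by positivity, ?_⟩
  intro x y hx hy
  have := Convex.norm_image_sub_le_of_norm_hasDerivWithin_le (f := gK K α)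
    (f' := fun x => K * (1 + α * x ^ (-α - 1))) (C := K * (1 + α * μ ^ (-α - 1)))
    (s := Ici μ) (x := y) (y := x)
    (fun x hx => (gK_hasStrictDerivAt (hμ.trans_le hx)).hasDerivAt.hasDerivWithinAt)
    (fun x hx => by
      have hx0 : 0 < x := hμ.trans_le hx
      rw [Real.norm_eq_abs, abs_of_nonneg (by positivity)]
      have : x ^ (-α - 1) ≤ μ ^ (-α - 1) :=
        Real.rpow_le_rpow_of_nonpos hμ hx (by linarith)
      gcongr) (convex_Ici μ) hy hx
  simpa [Real.norm_eq_abs] using this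

lemma gK_strict {K α : ℝ} {η : ℝ} (hη : 0 < η) :
    ∃ δ : ℝ, 0 < δ ∧ δ < 1 ∧ ∀ x y, |x - 1| ≤ δ → |y - 1| ≤ δ →
      |gK K α x - gK K α y - K * (1 + α) * (x - y)| ≤ η * |x - y| := by
  have h := gK_hasStrictDerivAt (K := K) (α := α) (x := 1) one_pos
  rw [Real.one_rpow, mul_one] at h
  have h1 := h.isLittleO.def hη
  obtain ⟨ε, hε, h2⟩ := Metric.eventually_nhds_iff.1 h1
  refine ⟨min (ε / 2) (1 / 2), by positivity, ?_, ?_⟩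
  · exact (min_le_right _ _).trans_lt (by norm_num)
  intro x y hx hy
  have h3 := h2 (y := (x, y)) (by
    rw [Prod.dist_eq, Real.dist_eq, Real.dist_eq]
    have : min (ε / 2) (1 / 2) < ε := (min_le_left _ _).trans_lt (by linarith)
    exact max_lt (hx.trans_lt this) (hy.trans_lt this))
  simp only [Real.norm_eq_abs, ContinuousLinearMap.toSpanSingleton_apply, smul_eq_mul] at h3
  rwa [mul_comm (x - y)] at h3

/-- Truncated nonlinearity. -/
def gm (K α m x : ℝ) : ℝ := gK K α (max x m) + K * (x - max x m)

lemma gm_eq {K α m x : ℝ} (h : m ≤ x) : gm K α m x = gK K α x := by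
  simp [gm, max_eq_left h]

lemma gm_lip {K α m : ℝ} (hK : 0 < K) (hα : 1 < α) (hm : 0 < m) :
    ∃ L : ℝ, 0 ≤ L ∧ ∀ x y, |gm K α m x - gm K α m y| ≤ L * |x - y| := by
  obtain ⟨L, hL, h⟩ := gK_lip hK hα hm
  refine ⟨L + 2 * K, by positivity, fun x y => ?_⟩
  have h1 := h (max x m) (max y m) (le_max_right _ _) (le_max_right _ _)
  have h2 : |max x m - max y m| ≤ |x - y| := abs_max_sub_max_le_abs x y m
  have h3 := mul_le_mul_of_nonneg_left h2 hL
  have h4 := mul_le_mul_of_nonneg_left h2 hK.le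
  have e : gm K α m x - gm K α m y = (gK K α (max x m) - gK K α (max y m)) + K * (x - y)
      - K * (max x m - max y m) := by unfold gm; ring
  rw [e]
  have h5 := abs_sub (gK K α (max x m) - gK K α (max y m) + K * (x - y)) (K * (max x m - max y m))
  have h6 := abs_add_le (gK K α (max x m) - gK K α (max y m)) (K * (x - y))
  rw [abs_mul, abs_of_pos hK] at h5 h6
  linarith

/-- Primitive of the truncated nonlinearity. -/
def Gm (K α m x : ℝ) : ℝ := ∫ s in (1:ℝ)..x, gm K α m s

lemma gm_continuous {K α m : ℝ} (hK : 0 < K) (hα : 1 < α) (hm : 0 < m) :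
    Continuous (gm K α m) := by
  obtain ⟨L, hL, h⟩ := gm_lip hK hα hm
  exact (LipschitzWith.of_dist_le_mul (K := ⟨L, hL⟩) (fun x y => h x y)).continuous

lemma Gm_hasDerivAt {K α m x : ℝ} (hK : 0 < K) (hα : 1 < α) (hm : 0 < m) :
    HasDerivAt (Gm K α m) (gm K α m x) x := by
  have := gm_continuous hK hα hm
  exact intervalIntegral.integral_hasDerivAt_right (this.intervalIntegrable _ _)
    (this.stronglyMeasurableAtFilter _ _) this.continuousAt

lemma Gm_one {K α m : ℝ} : Gm K α m 1 = 0 := by simp [Gm]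

lemma Gm_eq {K α m x : ℝ} (hα : 1 < α) (hK : 0 < K) (hm : 0 < m) (hm1 : m < 1) (hx : m ≤ x) :
    Gm K α m x = G0 K α x := by
  have hsub : ∀ s ∈ uIcc 1 x, m ≤ s := by
    intro s hs
    rcases le_total 1 x with h | h
    · rw [uIcc_of_le h] at hs; linarith [hs.1]
    · rw [uIcc_of_ge h] at hs; linarith [hs.1]
  unfold Gm
  rw [intervalIntegral.integral_eq_sub_of_hasDerivAt (f := G0 K α), G0_one, sub_zero]
  · intro s hs
    rw [gm_eq (hsub s hs)]
    exact G0_hasDerivAt hα (hm.trans_le (hsub s hs))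
  · exact (gm_continuous hK hα hm).intervalIntegrable _ _

lemma Gm_ge {K α m x : ℝ} (hα : 1 < α) (hK : 0 < K) (hm : 0 < m) (hm1 : m < 1) (hx : x ≤ m) :
    G0 K α m ≤ Gm K α m x := by
  rw [← Gm_eq hα hK hm hm1 le_rfl]
  have h : AntitoneOn (Gm K α m) (Icc x m) := by
    refine anti_of_hasDeriv (V' := gm K α m)
      (fun t _ => (Gm_hasDerivAt hK hα hm).continuousAt.continuousWithinAt)
      (fun t _ => Gm_hasDerivAt hK hα hm) ?_
    intro t ht
    unfold gm gK
    rw [max_eq_right ht.2.le]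
    have : 1 ≤ m ^ (-α) := Real.one_le_rpow_of_pos_of_le_one_of_nonpos hm hm1.le (by linarith)
    have e : K * (m - m ^ (-α)) + K * (t - m) = - (K * (m ^ (-α) - t)) := by ring
    rw [e]
    have := mul_nonneg hK.le (show 0 ≤ m ^ (-α) - t by linarith [ht.2])
    linarith
  exact h ⟨le_rfl, hx⟩ ⟨hx, le_rfl⟩ hx

/-- Solutions of the time-reversed equation on `[a, b]` as a first-order system. -/
def Sol (A K α lam C a b : ℝ) (ψ v : ℝ → ℝ) : Prop :=
  ContinuousOn ψ (Icc a b) ∧ ContinuousOn v (Icc a b) ∧ (∀ t ∈ Icc a b, 0 < ψ t) ∧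
    ∀ t ∈ Ioo a b, HasDerivAt ψ (v t) t ∧
      HasDerivAt v (-A * v t - gK K α (ψ t) - C * Real.exp (lam * t)) t

lemma hasDerivAt_exp_mul (c t : ℝ) :
    HasDerivAt (fun t : ℝ => Real.exp (c * t)) (c * Real.exp (c * t)) t := by
  have : HasDerivAt (fun t : ℝ => c * t) c t := by
    simpa using (hasDerivAt_id t).const_mul c
  exact this.exp.congr_deriv (by ring)

lemma approx_sol {A K α lam : ℝ} (C : ℝ) (hA : 0 < A) (hK : 0 < K) (hα : 1 < α) (hl : 0 < lam)
    (n : ℝ) (hn : 0 ≤ n) :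
    ∃ ψ v : ℝ → ℝ, Sol A K α lam C (-n) n ψ v ∧
      ∀ t ∈ Icc (-n) n, v t ^ 2 / 2 + G0 K α (ψ t)
        ≤ C ^ 2 / (8 * A * lam) * Real.exp (2 * lam * t) := by
  set D := C ^ 2 / (8 * A * lam) with hD
  have hD0 : 0 ≤ D := by positivity
  obtain ⟨m, hm, hm1, hbig⟩ := G0_big hK hα (D * Real.exp (2 * lam * n))
  obtain ⟨L, hL, hLip⟩ := gm_lip hK hα hm
  let F : ℝ → ℝ × ℝ → ℝ × ℝ := fun t y =>
    (y.2, -A * y.2 - gm K α m y.1 - C * Real.exp (lam * t))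
  have hFl : ∀ t, LipschitzWith ⟨1 + A + L, by positivity⟩ (F t) := by
    intro t
    refine LipschitzWith.of_dist_le_mul fun x y => ?_
    show dist (F t x) (F t y) ≤ (1 + A + L) * dist x y
    have h1 : |x.1 - y.1| ≤ dist x y := by
      rw [Prod.dist_eq, Real.dist_eq]; exact le_max_left _ _
    have h2 : |x.2 - y.2| ≤ dist x y := by
      rw [Prod.dist_eq, Real.dist_eq, Real.dist_eq]; exact le_max_right _ _
    have hd : 0 ≤ dist x y := dist_nonneg
    rw [Prod.dist_eq, Real.dist_eq, Real.dist_eq]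
    refine max_le ?_ ?_
    · show |x.2 - y.2| ≤ _
      nlinarith
    · show |(-A * x.2 - gm K α m x.1 - C * Real.exp (lam * t)) -
        (-A * y.2 - gm K α m y.1 - C * Real.exp (lam * t))| ≤ _
      have e : (-A * x.2 - gm K α m x.1 - C * Real.exp (lam * t)) -
        (-A * y.2 - gm K α m y.1 - C * Real.exp (lam * t)) =
          -(A * (x.2 - y.2)) - (gm K α m x.1 - gm K α m y.1) := by ring
      rw [e]
      have h3 := abs_sub (-(A * (x.2 - y.2))) (gm K α m x.1 - gm K α m y.1)
      rw [abs_neg, abs_mul, abs_of_pos hA] at h3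
      have h4 := hLip x.1 y.1
      nlinarith
  obtain ⟨y, hy0, hy⟩ := exists_sol_of_lip F _ (-n) n (by linarith) hFl
    (fun y => by simp only [F]; fun_prop) (1, 0)
  have hyc : ContinuousOn y (Icc (-n) n) := fun t ht => (hy t ht).continuousWithinAt
  have hyd : ∀ t ∈ Ioo (-n) n, HasDerivAt (fun t => (y t).1) (y t).2 t ∧
      HasDerivAt (fun t => (y t).2)
        (-A * (y t).2 - gm K α m (y t).1 - C * Real.exp (lam * t)) t := by
    intro t ht
    have h := (hy t ⟨ht.1.le, ht.2.le⟩).hasDerivAt (Icc_mem_nhds ht.1 ht.2)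
    exact ⟨(hasFDerivAt_fst (p := y t)).comp_hasDerivAt t h,
      (hasFDerivAt_snd (p := y t)).comp_hasDerivAt t h⟩
  have hGc : Continuous (Gm K α m) :=
    continuous_iff_continuousAt.2 fun x => (Gm_hasDerivAt hK hα hm).continuousAt
  have hc1 : ContinuousOn (fun t => (y t).1) (Icc (-n) n) := continuous_fst.comp_continuousOn hyc
  have hc2 : ContinuousOn (fun t => (y t).2) (Icc (-n) n) := continuous_snd.comp_continuousOn hyc
  have hE : AntitoneOn (fun t => (y t).2 ^ 2 / 2 + Gm K α m (y t).1
      - D * Real.exp (2 * lam * t)) (Icc (-n) n) := by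
    refine anti_of_hasDeriv (V' := fun t =>
      (y t).2 * (-A * (y t).2 - gm K α m (y t).1 - C * Real.exp (lam * t))
        + gm K α m (y t).1 * (y t).2 - D * (2 * lam * Real.exp (2 * lam * t))) ?_ ?_ ?_
    · refine ContinuousOn.sub (ContinuousOn.add ((hc2.pow 2).div_const 2)
        (hGc.comp_continuousOn hc1)) (by fun_prop)
    · intro t ht
      obtain ⟨h1, h2⟩ := hyd t ht
      have h3 := (Gm_hasDerivAt (x := (y t).1) hK hα hm).comp t h1
      have h4 := (h2.pow 2).div_const 2
      refine ((h4.add h3).sub ((hasDerivAt_exp_mul (2 * lam) t).const_mul D)).congr_deriv ?_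
      simp only [Nat.cast_ofNat]
      ring
    · intro t _
      have e : Real.exp (2 * lam * t) = Real.exp (lam * t) ^ 2 := by
        rw [← Real.exp_nat_mul]; congr 1; push_cast; ring
      rw [e]
      have hDe : D * (2 * lam * Real.exp (lam * t) ^ 2)
          = (C * Real.exp (lam * t)) ^ 2 / (4 * A) := by
        rw [hD]; field_simp; ring
      rw [hDe]
      set X := C * Real.exp (lam * t)
      set V := (y t).2
      have : X ^ 2 / (4 * A) - (V * (-A * V - X)) = (X + 2 * A * V) ^ 2 / (4 * A) := by
        field_simp; ring
      have h5 : 0 ≤ (X + 2 * A * V) ^ 2 / (4 * A) := by positivity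
      linarith
  have hEb : ∀ t ∈ Icc (-n) n, (y t).2 ^ 2 / 2 + Gm K α m (y t).1
      ≤ D * Real.exp (2 * lam * t) := by
    intro t ht
    have h := hE (left_mem_Icc.2 (ht.1.trans ht.2)) ht ht.1
    simp only [hy0, Gm_one] at h
    have := mul_nonneg hD0 (Real.exp_pos (2 * lam * -n)).le
    linarith
  have hlow : ∀ t ∈ Icc (-n) n, m < (y t).1 := by
    intro t ht
    by_contra hcon
    push Not at hcon
    have h1 := Gm_ge hα hK hm hm1 hcon
    have h2 := hbig m hm le_rfl
    have h3 := hEb t ht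
    have h4 : Real.exp (2 * lam * t) ≤ Real.exp (2 * lam * n) :=
      Real.exp_le_exp.2 (by have := ht.2; nlinarith)
    have h5 := mul_le_mul_of_nonneg_left h4 hD0
    nlinarith [sq_nonneg (y t).2]
  refine ⟨fun t => (y t).1, fun t => (y t).2,
    ⟨hc1, hc2, fun t ht => hm.trans (hlow t ht), fun t ht => ?_⟩, fun t ht => ?_⟩
  · have := hyd t ht
    rwa [gm_eq (hlow t ⟨ht.1.le, ht.2.le⟩).le] at this
  · have := hEb t ht
    rwa [Gm_eq hα hK hm hm1 (hlow t ht).le] at this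

lemma alg_lyap {A b : ℝ} (hA : 0 < A) (hb : 0 < b) :
    ∃ ε η c2 c3 : ℝ, 0 < ε ∧ 0 < η ∧ 0 < c2 ∧ 0 < c3 ∧ ∀ p q s : ℝ, |s - b * q| ≤ η * |q| →
      p * (-A * p - s) + b * q * p + ε * (p * p + q * (-A * p - s)) ≤ 0 ∧
      c2 * (q ^ 2 + p ^ 2) ≤ p ^ 2 / 2 + b * q ^ 2 / 2 + ε * (q * p) ∧
      p ^ 2 / 2 + b * q ^ 2 / 2 + ε * (q * p) ≤ c3 * (q ^ 2 + p ^ 2) := by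
  obtain ⟨ε, hε, e1, e2, e3, e4⟩ : ∃ ε : ℝ, 0 < ε ∧ ε ≤ A / 4 ∧ ε ≤ b / (4 * A) ∧
      ε ≤ 1 / 2 ∧ ε ≤ b / 2 := by
    refine ⟨min (min (A / 4) (b / (4 * A))) (min (1 / 2) (b / 2)), by positivity, ?_, ?_, ?_, ?_⟩
    · exact (min_le_left _ _).trans (min_le_left _ _)
    · exact (min_le_left _ _).trans (min_le_right _ _)
    · exact (min_le_right _ _).trans (min_le_left _ _)
    · exact (min_le_right _ _).trans (min_le_right _ _)
  obtain ⟨η, hη, n1, n2, n3⟩ : ∃ η : ℝ, 0 < η ∧ η ≤ A / 4 ∧ η ≤ ε * b / 4 ∧ η ≤ b / 4 := by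
    refine ⟨min (A / 4) (min (ε * b / 4) (b / 4)), by positivity, ?_, ?_, ?_⟩
    · exact min_le_left _ _
    · exact (min_le_right _ _).trans (min_le_left _ _)
    · exact (min_le_right _ _).trans (min_le_right _ _)
  have e2' : ε * A ≤ b / 4 := by
    rw [le_div_iff₀ (by positivity)] at e2; linarith
  refine ⟨ε, η, min 1 b / 4, 1 + b, hε, hη, by positivity, by positivity, ?_⟩
  intro p q s hs
  have hpq : |q| * |p| ≤ (q ^ 2 + p ^ 2) / 2 := by
    nlinarith [sq_nonneg (|q| - |p|), sq_abs q, sq_abs p]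
  have hqp : |q * p| ≤ (q ^ 2 + p ^ 2) / 2 := by rw [abs_mul]; exact hpq
  have hqp' := abs_le.1 hqp
  refine ⟨?_, ?_, ?_⟩
  · obtain ⟨r, hr⟩ : ∃ r, r = s - b * q := ⟨_, rfl⟩
    rw [← hr] at hs
    have hs' : s = b * q + r := by rw [hr]; ring
    have h1 : -(p * r) ≤ η * ((q ^ 2 + p ^ 2) / 2) := by
      calc -(p * r) ≤ |p * r| := neg_le_abs _
        _ = |p| * |r| := abs_mul _ _
        _ ≤ |p| * (η * |q|) := mul_le_mul_of_nonneg_left hs (abs_nonneg _)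
        _ = η * (|q| * |p|) := by ring
        _ ≤ _ := mul_le_mul_of_nonneg_left hpq hη.le
    have h2 : -(q * r) ≤ η * q ^ 2 := by
      calc -(q * r) ≤ |q * r| := neg_le_abs _
        _ = |q| * |r| := abs_mul _ _
        _ ≤ |q| * (η * |q|) := mul_le_mul_of_nonneg_left hs (abs_nonneg _)
        _ = η * |q| ^ 2 := by ring
        _ = _ := by rw [sq_abs]
    have h3 : -(ε * A * (q * p)) ≤ A / 4 * p ^ 2 + ε * (ε * A) * q ^ 2 := by
      nlinarith [mul_nonneg hA.le (sq_nonneg (p / 2 + ε * q))]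
    have h4 : ε * (ε * A) * q ^ 2 ≤ ε * (b / 4) * q ^ 2 := by gcongr
    have h5 : ε * (-(q * r)) ≤ ε * (b / 4 * q ^ 2) := by
      refine mul_le_mul_of_nonneg_left (h2.trans ?_) hε.le
      gcongr
    have h6 : η * q ^ 2 ≤ ε * b / 4 * q ^ 2 := by gcongr
    have h7 : η * p ^ 2 ≤ A / 4 * p ^ 2 := by gcongr
    have h8 : ε * p ^ 2 ≤ A / 4 * p ^ 2 := by gcongr
    have h9 : 0 ≤ A * p ^ 2 := by positivity
    have h10 : 0 ≤ ε * b * q ^ 2 := by positivity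
    rw [hs']
    nlinarith
  · have h1 : min 1 b * p ^ 2 ≤ 1 * p ^ 2 := by gcongr; exact min_le_left _ _
    have h2 : min 1 b * q ^ 2 ≤ b * q ^ 2 := by gcongr; exact min_le_right _ _
    have h3 : ε ≤ min 1 b / 2 := by
      rcases min_choice 1 b with h | h <;> rw [h] <;> assumption
    have h4 : -(ε * (q * p)) ≤ min 1 b / 2 * ((q ^ 2 + p ^ 2) / 2) := by
      have : ε * (-(q * p)) ≤ ε * ((q ^ 2 + p ^ 2) / 2) :=
        mul_le_mul_of_nonneg_left (by linarith [hqp'.1]) hε.le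
      have h5 : ε * ((q ^ 2 + p ^ 2) / 2) ≤ min 1 b / 2 * ((q ^ 2 + p ^ 2) / 2) := by gcongr
      linarith
    linarith
  · have h4 : ε * (q * p) ≤ 1 / 2 * ((q ^ 2 + p ^ 2) / 2) := by
      have : ε * (q * p) ≤ ε * ((q ^ 2 + p ^ 2) / 2) := mul_le_mul_of_nonneg_left hqp'.2 hε.le
      have h5 : ε * ((q ^ 2 + p ^ 2) / 2) ≤ 1 / 2 * ((q ^ 2 + p ^ 2) / 2) := by gcongr
      linarith
    have h6 : 0 ≤ b * q ^ 2 := by positivity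
    have h7 : 0 ≤ b * p ^ 2 := by positivity
    nlinarith [sq_nonneg p, sq_nonneg q]

lemma stability {A K α : ℝ} (lam C : ℝ) (hA : 0 < A) (hK : 0 < K) (hα : 1 < α) :
    ∃ δ : ℝ, 0 < δ ∧ δ < 1 ∧ ∀ μ, 0 < μ → ∀ T0 T, T0 ≤ T → ∃ B : ℝ, 0 ≤ B ∧
      ∀ a ≤ T0, ∀ ψ₁ v₁ ψ₂ v₂ : ℝ → ℝ, Sol A K α lam C a T ψ₁ v₁ → Sol A K α lam C a T ψ₂ v₂ →
        (∀ t ∈ Icc a T0, |ψ₁ t - 1| ≤ δ) → (∀ t ∈ Icc a T0, |ψ₂ t - 1| ≤ δ) →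
        (∀ t ∈ Icc a T, μ ≤ ψ₁ t) → (∀ t ∈ Icc a T, μ ≤ ψ₂ t) →
        ∀ t ∈ Icc a T, (ψ₁ t - ψ₂ t) ^ 2 + (v₁ t - v₂ t) ^ 2
          ≤ B * ((ψ₁ a - ψ₂ a) ^ 2 + (v₁ a - v₂ a) ^ 2) := by
  have hb : 0 < K * (1 + α) := by positivity
  obtain ⟨ε, η, c2, c3, hε, hη, hc2, hc3, halg⟩ := alg_lyap hA hb
  obtain ⟨δ, hδ, hδ1, hstr⟩ := gK_strict (K := K) (α := α) hη
  refine ⟨δ, hδ, hδ1, ?_⟩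
  intro μ hμ T0 T hT
  obtain ⟨L, hL, hLip⟩ := gK_lip hK hα hμ
  refine ⟨Real.exp ((1 + L) * (T - T0)) * (c3 / c2), by positivity, ?_⟩
  intro a ha ψ₁ v₁ ψ₂ v₂ ⟨c1, d1, pos1, D1⟩ ⟨c1', d1', pos2, D2⟩ n1 n2 m1 m2
  have hq : ∀ t ∈ Ioo a T, HasDerivAt (fun t => ψ₁ t - ψ₂ t) (v₁ t - v₂ t) t :=
    fun t ht => (D1 t ht).1.sub (D2 t ht).1
  have hp : ∀ t ∈ Ioo a T, HasDerivAt (fun t => v₁ t - v₂ t)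
      (-A * (v₁ t - v₂ t) - (gK K α (ψ₁ t) - gK K α (ψ₂ t))) t :=
    fun t ht => ((D1 t ht).2.sub (D2 t ht).2).congr_deriv (by ring)
  have hqc : ContinuousOn (fun t => ψ₁ t - ψ₂ t) (Icc a T) := c1.sub c1'
  have hpc : ContinuousOn (fun t => v₁ t - v₂ t) (Icc a T) := d1.sub d1'
  set q := fun t => ψ₁ t - ψ₂ t with hqd
  set p := fun t => v₁ t - v₂ t with hpd
  have hsub : Icc a T0 ⊆ Icc a T := Icc_subset_Icc_right hT
  have hV : AntitoneOn (fun t => p t ^ 2 / 2 + K * (1 + α) * q t ^ 2 / 2 + ε * (q t * p t))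
      (Icc a T0) := by
    refine anti_of_hasDeriv (V' := fun t =>
      p t * (-A * p t - (gK K α (ψ₁ t) - gK K α (ψ₂ t))) + K * (1 + α) * q t * p t
      + ε * (p t * p t + q t * (-A * p t - (gK K α (ψ₁ t) - gK K α (ψ₂ t))))) ?_ ?_ ?_
    · have h1 := hqc.mono hsub
      have h2 := hpc.mono hsub
      fun_prop
    · intro t ht
      have ht' : t ∈ Ioo a T := ⟨ht.1, ht.2.trans_le hT⟩
      have h1 := hq t ht'
      have h2 := hp t ht'
      refine ((((h2.pow 2).div_const 2).add (((h1.pow 2).const_mul (K * (1 + α))).div_const 2)).add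
        ((h1.mul h2).const_mul ε)).congr_deriv ?_
      simp only [Nat.cast_ofNat, hpd, hqd]
      ring
    · intro t ht
      have ht' : t ∈ Icc a T0 := ⟨ht.1.le, ht.2.le⟩
      exact (halg (p t) (q t) _ (hstr _ _ (n1 t ht') (n2 t ht'))).1
  have hdum : ∀ t, ∃ s : ℝ, |s - K * (1 + α) * q t| ≤ η * |q t| := fun t =>
    ⟨K * (1 + α) * q t, by simp; positivity⟩
  have hW0 : ∀ t ∈ Icc a T0, q t ^ 2 + p t ^ 2 ≤ c3 / c2 * (q a ^ 2 + p a ^ 2) := by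
    intro t ht
    have h := hV ⟨le_rfl, ha⟩ ht ht.1
    beta_reduce at h
    obtain ⟨s, hs⟩ := hdum t
    obtain ⟨s', hs'⟩ := hdum a
    have h1 := (halg (p t) (q t) s hs).2.1
    have h2 := (halg (p a) (q a) s' hs').2.2
    rw [div_mul_eq_mul_div, le_div_iff₀ hc2]
    linarith
  have hexp : 1 ≤ Real.exp ((1 + L) * (T - T0)) :=
    Real.one_le_exp (mul_nonneg (by linarith) (by linarith))
  have hWa : 0 ≤ c3 / c2 * (q a ^ 2 + p a ^ 2) := by positivity
  intro t ht
  show q t ^ 2 + p t ^ 2 ≤ _ * (q a ^ 2 + p a ^ 2)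
  rcases le_total t T0 with h | h
  · have := hW0 t ⟨ht.1, h⟩
    rw [mul_assoc]
    nlinarith
  · have hsub' : Icc T0 T ⊆ Icc a T := Icc_subset_Icc_left ha
    have hg := gron_simple (a := T0) (b := T) (κ := 1 + L) (V := fun t => q t ^ 2 + p t ^ 2)
      (V' := fun t => 2 * q t * p t
        + 2 * p t * (-A * p t - (gK K α (ψ₁ t) - gK K α (ψ₂ t)))) ?_ ?_ ?_ t ⟨h, ht.2⟩
    · have h0 := hW0 T0 ⟨ha, le_rfl⟩
      have h1 : Real.exp ((1 + L) * (t - T0)) ≤ Real.exp ((1 + L) * (T - T0)) :=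
        Real.exp_le_exp.2 (mul_le_mul_of_nonneg_left (by linarith [ht.2]) (by linarith))
      calc q t ^ 2 + p t ^ 2 ≤ _ := hg
        _ ≤ Real.exp ((1 + L) * (T - T0)) * (c3 / c2 * (q a ^ 2 + p a ^ 2)) :=
          mul_le_mul h1 h0 (by positivity) (by positivity)
        _ = _ := by ring
    · have h1 := hqc.mono hsub'
      have h2 := hpc.mono hsub'
      fun_prop
    · intro t ht
      have ht' : t ∈ Ioo a T := ⟨ha.trans_lt ht.1, ht.2⟩
      refine (((hq t ht').pow 2).add ((hp t ht').pow 2)).congr_deriv ?_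
      simp only [Nat.cast_ofNat, hpd, hqd]
      ring
    · intro t ht
      have ht' : t ∈ Icc a T := ⟨ha.trans ht.1.le, ht.2.le⟩
      have h1 := hLip _ _ (m1 t ht') (m2 t ht')
      set s := gK K α (ψ₁ t) - gK K α (ψ₂ t)
      have h1' : |s| ≤ L * |q t| := h1
      have h2 : -(p t * s) ≤ L * ((q t ^ 2 + p t ^ 2) / 2) := by
        calc -(p t * s) ≤ |p t * s| := neg_le_abs _
          _ = |p t| * |s| := abs_mul _ _
          _ ≤ |p t| * (L * |q t|) := mul_le_mul_of_nonneg_left h1' (abs_nonneg _)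
          _ = L * (|q t| * |p t|) := by ring
          _ ≤ _ := mul_le_mul_of_nonneg_left (by
            nlinarith [sq_nonneg (|q t| - |p t|), sq_abs (q t), sq_abs (p t)]) hL
      nlinarith [sq_nonneg (q t - p t), mul_nonneg hA.le (sq_nonneg (p t))]

lemma lim_helper (f : ℕ → ℝ → ℝ)
    (h : ∀ T : ℝ, ∃ b : ℕ → ℝ, Tendsto b atTop (𝓝 0) ∧ ∃ n0, ∀ n ≥ n0, ∀ k ≥ n,
      ∀ t ∈ Icc (-T) T, |f n t - f k t| ≤ b n) :
    ∃ F : ℝ → ℝ, (∀ t, Tendsto (fun n => f n t) atTop (𝓝 (F t))) ∧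
      ∀ T, TendstoUniformlyOn f F atTop (Icc (-T) T) := by
  have hlim : ∀ t, ∃ x, Tendsto (fun n => f n t) atTop (𝓝 x) := by
    intro t
    obtain ⟨b, hb, n0, hn⟩ := h |t|
    refine cauchySeq_tendsto_of_complete ?_
    rw [Metric.cauchySeq_iff']
    intro ε hε
    obtain ⟨n1, hn1⟩ := eventually_atTop.1 (hb.eventually_lt_const hε)
    refine ⟨max n0 n1, fun n hnn => ?_⟩
    rw [dist_comm, Real.dist_eq]
    exact (hn _ (le_max_left _ _) n hnn t ⟨neg_abs_le t, le_abs_self t⟩).trans_lt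
      (hn1 _ (le_max_right _ _))
  choose F hF using hlim
  refine ⟨F, hF, fun T => ?_⟩
  obtain ⟨b, hb, n0, hn⟩ := h T
  rw [Metric.tendstoUniformlyOn_iff]
  intro ε hε
  filter_upwards [hb.eventually_lt_const hε, eventually_ge_atTop n0] with n hn1 hn2 t ht
  have h1 : Tendsto (fun k => |f n t - f k t|) atTop (𝓝 |f n t - F t|) :=
    ((tendsto_const_nhds).sub (hF t)).abs
  have h2 : |f n t - F t| ≤ b n :=
    le_of_tendsto h1 (by
      filter_upwards [eventually_ge_atTop n] with k hk
      exact hn n hn2 k hk t ht)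
  rw [dist_comm, Real.dist_eq]
  exact h2.trans_lt hn1

lemma Sol.mono {A K α lam C a b a' b' : ℝ} {ψ v : ℝ → ℝ} (h : Sol A K α lam C a b ψ v)
    (ha : a ≤ a') (hb : b' ≤ b) : Sol A K α lam C a' b' ψ v := by
  obtain ⟨h1, h2, h3, h4⟩ := h
  have hs : Icc a' b' ⊆ Icc a b := Icc_subset_Icc ha hb
  exact ⟨h1.mono hs, h2.mono hs, fun t ht => h3 t (hs ht),
    fun t ht => h4 t ⟨ha.trans_lt ht.1, ht.2.trans_le hb⟩⟩

lemma exp_small {c ε lam : ℝ} (hl : 0 < lam) (hε : 0 < ε) :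
    ∃ T0 : ℝ, ∀ t ≤ T0, c * Real.exp (2 * lam * t) ≤ ε := by
  have h1 : Tendsto (fun t : ℝ => 2 * lam * t) atBot atBot :=
    tendsto_id.const_mul_atBot (by positivity)
  have h2 := (Real.tendsto_exp_atBot.comp h1).const_mul c
  rw [mul_zero] at h2
  obtain ⟨T0, hT0⟩ := eventually_atBot.1 (h2.eventually_lt_const hε)
  exact ⟨T0, fun t ht => (hT0 t ht).le⟩

lemma exists_profile {A K α lam : ℝ} (C : ℝ) (hA : 0 < A) (hK : 0 < K) (hα : 1 < α)
    (hl : 0 < lam) :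
    ∃ ψ v : ℝ → ℝ, (∀ t, 0 < ψ t) ∧
      (∀ t, HasDerivAt ψ (v t) t ∧
        HasDerivAt v (-A * v t - gK K α (ψ t) - C * Real.exp (lam * t)) t) ∧
      ∀ t, K / 2 * (ψ t - 1) ^ 2 ≤ C ^ 2 / (8 * A * lam) * Real.exp (2 * lam * t) := by
  choose ψ v hS hE using fun n : ℕ => approx_sol (lam := lam) C hA hK hα hl (n : ℝ) n.cast_nonneg
  set D := C ^ 2 / (8 * A * lam) with hD
  have hD0 : 0 ≤ D := by positivity
  obtain ⟨δ, hδ, hδ1, hst⟩ := stability lam C hA hK hα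
  obtain ⟨T0, hT0⟩ := exp_small (c := D) hl (show 0 < K / 2 * δ ^ 2 by positivity)
  have hψb : ∀ n : ℕ, ∀ t ∈ Icc (-(n : ℝ)) n,
      K / 2 * (ψ n t - 1) ^ 2 ≤ D * Real.exp (2 * lam * t) := by
    intro n t ht
    have h1 := hE n t ht
    have h2 := G0_ge hK hα ((hS n).2.2.1 t ht)
    nlinarith [sq_nonneg (v n t)]
  have hvb : ∀ n : ℕ, ∀ t ∈ Icc (-(n : ℝ)) n,
      v n t ^ 2 / 2 ≤ D * Real.exp (2 * lam * t) := by
    intro n t ht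
    have h1 := hE n t ht
    have h2 := G0_ge hK hα ((hS n).2.2.1 t ht)
    nlinarith [mul_nonneg hK.le (sq_nonneg (ψ n t - 1))]
  have key : ∀ T : ℝ, ∃ B : ℝ, 0 ≤ B ∧ ∃ n0 : ℕ, ∃ μ : ℝ, 0 < μ ∧ (∀ n ≥ n0, T ≤ (n : ℝ)) ∧
      (∀ n ≥ n0, ∀ t ∈ Icc (-T) T, μ ≤ ψ n t) ∧
      ∀ n ≥ n0, ∀ k ≥ n, ∀ t ∈ Icc (-T) T,
        (ψ n t - ψ k t) ^ 2 + (v n t - v k t) ^ 2 ≤ B * Real.exp (2 * lam * (-(n:ℝ))) := by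
    intro T
    obtain ⟨μ, hμ, hμ1, hbig⟩ := G0_big hK hα (D * Real.exp (2 * lam * max T T0))
    obtain ⟨B, hB, hst'⟩ := hst μ hμ T0 (max T T0) (le_max_right _ _)
    obtain ⟨n0, hn0⟩ := exists_nat_ge (|T| + |T0|)
    have hlow : ∀ n : ℕ, ∀ t ∈ Icc (-(n : ℝ)) n, t ≤ max T T0 → μ ≤ ψ n t := by
      intro n t ht htT
      by_contra hcon
      push Not at hcon
      have h1 := hbig _ ((hS n).2.2.1 t ht) hcon.le
      have h2 := hE n t ht
      have h3 : Real.exp (2 * lam * t) ≤ Real.exp (2 * lam * max T T0) :=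
        Real.exp_le_exp.2 (mul_le_mul_of_nonneg_left htT (by positivity))
      have h4 := mul_le_mul_of_nonneg_left h3 hD0
      nlinarith [sq_nonneg (v n t)]
    have hTn : ∀ n : ℕ, n0 ≤ n → |T| + |T0| ≤ (n : ℝ) := fun n hn =>
      hn0.trans (by exact_mod_cast hn)
    refine ⟨B * ((8 / K + 8) * D), by positivity, n0, μ, hμ, ?_, ?_, ?_⟩
    · intro n hn
      linarith [hTn n hn, le_abs_self T, abs_nonneg T0]
    · intro n hn t ht
      have := hTn n hn
      refine hlow n t ⟨?_, ?_⟩ (ht.2.trans (le_max_left _ _))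
      · linarith [ht.1, le_abs_self T, abs_nonneg T0]
      · linarith [ht.2, le_abs_self T, abs_nonneg T0]
    · intro n hn k hk t ht
      have h1 := hTn n hn
      have hnk : (n : ℝ) ≤ k := by exact_mod_cast hk
      have hmax : max T T0 ≤ n := max_le (by linarith [le_abs_self T, abs_nonneg T0])
        (by linarith [le_abs_self T0, abs_nonneg T])
      have hT0n : -(n : ℝ) ≤ T0 := by linarith [neg_abs_le T0, abs_nonneg T]
      have near : ∀ j : ℕ, n ≤ j → ∀ t ∈ Icc (-(n : ℝ)) T0, |ψ j t - 1| ≤ δ := by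
        intro j hj t ht
        have hnj : (n : ℝ) ≤ j := by exact_mod_cast hj
        have h2 := hψb j t ⟨by linarith [ht.1], by linarith [ht.2, le_max_right T T0]⟩
        have h3 := hT0 t ht.2
        refine abs_le_of_sq_le_sq ?_ hδ.le
        have h4 : K / 2 * (ψ j t - 1) ^ 2 ≤ K / 2 * δ ^ 2 := h2.trans h3
        exact le_of_mul_le_mul_left h4 (by positivity)
      have low : ∀ j : ℕ, n ≤ j → ∀ t ∈ Icc (-(n : ℝ)) (max T T0), μ ≤ ψ j t := by
        intro j hj t ht
        have hnj : (n : ℝ) ≤ j := by exact_mod_cast hj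
        exact hlow j t ⟨by linarith [ht.1], by linarith [ht.2]⟩ ht.2
      have h5 := hst' (-(n : ℝ)) hT0n (ψ n) (v n) (ψ k) (v k)
        ((hS n).mono le_rfl hmax) ((hS k).mono (by linarith) (by linarith))
        (near n le_rfl) (near k hk) (low n le_rfl) (low k hk) t
        ⟨by linarith [ht.1, le_abs_self T, abs_nonneg T0], ht.2.trans (le_max_left _ _)⟩
      refine h5.trans ?_
      have hn1 : (-(n : ℝ)) ∈ Icc (-(n : ℝ)) n := ⟨le_rfl, by linarith [abs_nonneg T, abs_nonneg T0]⟩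
      have hk1 : (-(n : ℝ)) ∈ Icc (-(k : ℝ)) k :=
        ⟨by linarith, by linarith [abs_nonneg T, abs_nonneg T0]⟩
      have a1 := hψb n _ hn1
      have a2 := hψb k _ hk1
      have a3 := hvb n _ hn1
      have a4 := hvb k _ hk1
      set X := D * Real.exp (2 * lam * (-(n:ℝ))) with hX
      set x := ψ n (-(n:ℝ))
      set y := ψ k (-(n:ℝ))
      set p := v n (-(n:ℝ))
      set r := v k (-(n:ℝ))
      have b1 : (x - 1) ^ 2 ≤ 2 / K * X := by
        rw [div_mul_eq_mul_div, le_div_iff₀ hK]; linarith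
      have b2 : (y - 1) ^ 2 ≤ 2 / K * X := by
        rw [div_mul_eq_mul_div, le_div_iff₀ hK]; linarith
      have b3 : (x - y) ^ 2 ≤ 8 / K * X := by
        have : 8 / K * X = 2 * (2 / K * X) + 2 * (2 / K * X) := by ring
        nlinarith [sq_nonneg ((x - 1) + (y - 1))]
      have b4 : (p - r) ^ 2 ≤ 8 * X := by nlinarith [sq_nonneg (p + r)]
      have e : B * ((8 / K + 8) * D) * Real.exp (2 * lam * (-(n:ℝ))) = B * (8 / K * X + 8 * X) := by
        rw [hX]; ring
      rw [e]
      exact mul_le_mul_of_nonneg_left (by linarith) hB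
  have hbt : ∀ B : ℝ, Tendsto (fun n : ℕ => Real.sqrt (B * Real.exp (2 * lam * (-(n:ℝ)))))
      atTop (𝓝 0) := by
    intro B
    have h1 : Tendsto (fun n : ℕ => 2 * lam * (-(n:ℝ))) atTop atBot :=
      (tendsto_neg_atTop_atBot.comp tendsto_natCast_atTop_atTop).const_mul_atBot (by positivity)
    have h2 := (Real.tendsto_exp_atBot.comp h1).const_mul B
    rw [mul_zero] at h2
    have h3 := h2.sqrt
    rwa [Real.sqrt_zero] at h3
  obtain ⟨Ψ, hΨ, -⟩ := lim_helper ψ (fun T => by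
    obtain ⟨B, hB, n0, μ, hμ, h1, h2, h3⟩ := key T
    refine ⟨_, hbt B, n0, fun n hn k hk t ht => ?_⟩
    refine Real.abs_le_sqrt ?_
    nlinarith [h3 n hn k hk t ht, sq_nonneg (v n t - v k t)])
  obtain ⟨Vv, hV, hVu⟩ := lim_helper v (fun T => by
    obtain ⟨B, hB, n0, μ, hμ, h1, h2, h3⟩ := key T
    refine ⟨_, hbt B, n0, fun n hn k hk t ht => ?_⟩
    refine Real.abs_le_sqrt ?_
    nlinarith [h3 n hn k hk t ht, sq_nonneg (ψ n t - ψ k t)])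
  obtain ⟨W, hW, hWu⟩ := lim_helper
    (fun n t => -A * v n t - gK K α (ψ n t) - C * Real.exp (lam * t)) (fun T => by
    obtain ⟨B, hB, n0, μ, hμ, h1, h2, h3⟩ := key T
    obtain ⟨L, hL, hLip⟩ := gK_lip hK hα hμ
    refine ⟨fun n => (A + L) * Real.sqrt (B * Real.exp (2 * lam * (-(n:ℝ)))),
      by simpa using (hbt B).const_mul (A + L), n0, fun n hn k hk t ht => ?_⟩
    have k1 : |ψ n t - ψ k t| ≤ Real.sqrt (B * Real.exp (2 * lam * (-(n:ℝ)))) :=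
      Real.abs_le_sqrt (by nlinarith [h3 n hn k hk t ht, sq_nonneg (v n t - v k t)])
    have k2 : |v n t - v k t| ≤ Real.sqrt (B * Real.exp (2 * lam * (-(n:ℝ)))) :=
      Real.abs_le_sqrt (by nlinarith [h3 n hn k hk t ht, sq_nonneg (ψ n t - ψ k t)])
    have k3 := hLip _ _ (h2 n hn t ht) (h2 k (le_trans hn hk) t ht)
    have e : -A * v n t - gK K α (ψ n t) - C * Real.exp (lam * t)
        - (-A * v k t - gK K α (ψ k t) - C * Real.exp (lam * t))
        = -(A * (v n t - v k t)) - (gK K α (ψ n t) - gK K α (ψ k t)) := by ring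
    rw [e]
    have k4 := abs_sub (-(A * (v n t - v k t))) (gK K α (ψ n t) - gK K α (ψ k t))
    rw [abs_neg, abs_mul, abs_of_pos hA] at k4
    have k5 := mul_le_mul_of_nonneg_left k2 hA.le
    have k6 := mul_le_mul_of_nonneg_left k1 hL
    linarith)
  have hpos : ∀ t, 0 < Ψ t := by
    intro t
    obtain ⟨B, hB, n0, μ, hμ, h1, h2, h3⟩ := key |t|
    refine hμ.trans_le (ge_of_tendsto (hΨ t) ?_)
    filter_upwards [eventually_ge_atTop n0] with n hn
    exact h2 n hn t ⟨neg_abs_le t, le_abs_self t⟩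
  have hWeq : ∀ t, W t = -A * Vv t - gK K α (Ψ t) - C * Real.exp (lam * t) := by
    intro t
    refine tendsto_nhds_unique (hW t) ?_
    have h1 := (gK_hasStrictDerivAt (K := K) (α := α) (hpos t)).hasDerivAt.continuousAt
    exact (((hV t).const_mul (-A)).sub (h1.tendsto.comp (hΨ t))).sub_const _
  have hder : ∀ t, ∀ᶠ n : ℕ in atTop, ∀ x ∈ Ioo (-(|t| + 1)) (|t| + 1),
      HasDerivAt (ψ n) (v n x) x ∧
      HasDerivAt (v n) (-A * v n x - gK K α (ψ n x) - C * Real.exp (lam * x)) x := by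
    intro t
    obtain ⟨n0, hn0⟩ := exists_nat_ge (|t| + 1)
    filter_upwards [eventually_ge_atTop n0] with n hn x hx
    have hn' : (n0 : ℝ) ≤ n := by exact_mod_cast hn
    exact (hS n).2.2.2 x ⟨by linarith [hx.1], by linarith [hx.2]⟩
  have hmem : ∀ t : ℝ, t ∈ Ioo (-(|t| + 1)) (|t| + 1) := fun t =>
    ⟨by linarith [neg_abs_le t], by linarith [le_abs_self t]⟩
  refine ⟨Ψ, Vv, hpos, fun t => ⟨?_, ?_⟩, fun t => ?_⟩
  · exact hasDerivAt_of_tendstoUniformlyOn isOpen_Ioo ((hVu (|t| + 1)).mono Ioo_subset_Icc_self)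
      ((hder t).mono fun n h x hx => (h x hx).1) (fun x _ => hΨ x) (hmem t)
  · rw [← hWeq t]
    exact hasDerivAt_of_tendstoUniformlyOn isOpen_Ioo ((hWu (|t| + 1)).mono Ioo_subset_Icc_self)
      ((hder t).mono fun n h x hx => (h x hx).2) (fun x _ => hV x) (hmem t)
  · have h1 : Tendsto (fun n => K / 2 * (ψ n t - 1) ^ 2) atTop (𝓝 (K / 2 * (Ψ t - 1) ^ 2)) :=
      (((hΨ t).sub_const 1).pow 2).const_mul _
    refine le_of_tendsto h1 ?_
    obtain ⟨n0, hn0⟩ := exists_nat_ge |t|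
    filter_upwards [eventually_ge_atTop n0] with n hn
    have hn' : (n0 : ℝ) ≤ n := by exact_mod_cast hn
    exact hψb n t ⟨by linarith [neg_abs_le t], by linarith [le_abs_self t]⟩

lemma slope_bound {A B M t0 : ℝ} {u w f : ℝ → ℝ} (hA : 0 < A) (hB : 0 ≤ B)
    (hu : ∀ t, HasDerivAt u (w t) t) (hw : ∀ t, HasDerivAt w (-A * w t + f t) t)
    (hf : ∀ t ≤ t0, |f t| ≤ B) (hM : ∀ t ≤ t0, |u t| ≤ M) : w t0 ≤ B / A := by
  by_contra hcon
  push Not at hcon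
  obtain ⟨κ, hκ⟩ : ∃ κ, κ = w t0 - B / A := ⟨_, rfl⟩
  have hκ0 : 0 < κ := by linarith
  have hBA : 0 ≤ B / A := by positivity
  have hM0 : 0 ≤ M := (abs_nonneg _).trans (hM t0 le_rfl)
  have h1 : ∀ t ≤ t0, κ ≤ w t := by
    intro t ht
    have hanti : AntitoneOn (fun t => (w t - B / A) * Real.exp (A * t)) (Icc t t0) := by
      refine anti_of_hasDeriv (V' := fun t => (-A * w t + f t) * Real.exp (A * t)
        + (w t - B / A) * (A * Real.exp (A * t))) ?_ ?_ ?_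
      · intro s _
        exact (((hw s).sub_const _).mul (hasDerivAt_exp_mul A s)).continuousAt.continuousWithinAt
      · intro s _
        exact ((hw s).sub_const _).mul (hasDerivAt_exp_mul A s)
      · intro s hs
        have e : (-A * w s + f s) * Real.exp (A * s) + (w s - B / A) * (A * Real.exp (A * s))
            = -((B - f s) * Real.exp (A * s)) := by field_simp; ring
        rw [e]
        have := (abs_le.1 (hf s hs.2.le)).2
        have := mul_nonneg (sub_nonneg.2 this) (Real.exp_pos (A * s)).le
        linarith
    have h2 := hanti ⟨le_rfl, ht⟩ ⟨ht, le_rfl⟩ ht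
    beta_reduce at h2
    rw [← hκ] at h2
    have h3 : Real.exp (A * t) ≤ Real.exp (A * t0) :=
      Real.exp_le_exp.2 (mul_le_mul_of_nonneg_left ht hA.le)
    have h4 : κ * Real.exp (A * t) ≤ (w t - B / A) * Real.exp (A * t) :=
      (mul_le_mul_of_nonneg_left h3 hκ0.le).trans h2
    have h5 := le_of_mul_le_mul_right h4 (Real.exp_pos _)
    linarith
  obtain ⟨t, ht⟩ : ∃ t, t = t0 - (2 * M + 1) / κ := ⟨_, rfl⟩
  have hdiv : 0 ≤ (2 * M + 1) / κ := by positivity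
  have htt : t ≤ t0 := by linarith
  have hanti : AntitoneOn (fun t => κ * t - u t) (Icc t t0) := by
    refine anti_of_hasDeriv (V' := fun t => κ - w t) ?_ ?_ ?_
    · intro s _
      exact (((hasDerivAt_id s).const_mul κ).sub (hu s)).continuousAt.continuousWithinAt
    · intro s _
      exact (((hasDerivAt_id s).const_mul κ).sub (hu s)).congr_deriv (by ring)
    · intro s hs
      linarith [h1 s hs.2.le]
  have h2 := hanti ⟨le_rfl, htt⟩ ⟨htt, le_rfl⟩ htt
  beta_reduce at h2
  have h3 : κ * t = κ * t0 - (2 * M + 1) := by rw [ht]; field_simp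
  have h4 := abs_le.1 (hM t htt)
  have h5 := abs_le.1 (hM t0 le_rfl)
  linarith [h4.1, h5.2]

lemma alg_lyap2 {A K : ℝ} (hA : 0 < A) (hK : 0 < K) :
    ∃ ε c R c2 : ℝ, 0 < ε ∧ 0 < c ∧ 0 < R ∧ 0 < c2 ∧ ∀ v q g G X : ℝ,
      K * q ^ 2 ≤ g * q → G ≤ g * q → K / 2 * q ^ 2 ≤ G →
      v * (-A * v - g - X) + g * v + ε * (v * v + q * (-A * v - g - X))
        ≤ -c * (v ^ 2 / 2 + G + ε * (q * v)) + R * X ^ 2 ∧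
      c2 * (q ^ 2 + v ^ 2) ≤ v ^ 2 / 2 + G + ε * (q * v) := by
  obtain ⟨ε, hε, e1, e2, e3, e4⟩ : ∃ ε : ℝ, 0 < ε ∧ ε ≤ A / 4 ∧ ε ≤ K / (8 * A) ∧
      ε ≤ 1 / 2 ∧ ε ≤ K / 4 := by
    refine ⟨min (min (A / 4) (K / (8 * A))) (min (1 / 2) (K / 4)), by positivity, ?_, ?_, ?_, ?_⟩
    · exact (min_le_left _ _).trans (min_le_left _ _)
    · exact (min_le_left _ _).trans (min_le_right _ _)
    · exact (min_le_right _ _).trans (min_le_left _ _)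
    · exact (min_le_right _ _).trans (min_le_right _ _)
  have e2' : ε * A ≤ K / 8 := by
    rw [le_div_iff₀ (by positivity)] at e2; linarith
  refine ⟨ε, ε / 2, 1 / A + 2 * ε / K, min 1 K / 4, hε, by positivity, by positivity,
    by positivity, ?_⟩
  intro v q g G X h1 h2 h3
  have hqv1 : q * v ≤ (q ^ 2 + v ^ 2) / 2 := by nlinarith [sq_nonneg (q - v)]
  have hqv2 : -(q * v) ≤ (q ^ 2 + v ^ 2) / 2 := by nlinarith [sq_nonneg (q + v)]
  constructor
  · have a1 : -(v * X) ≤ A / 4 * v ^ 2 + 1 / A * X ^ 2 := by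
      have : A / 4 * v ^ 2 + 1 / A * X ^ 2 + v * X = A * (v / 2 + X / A) ^ 2 := by
        field_simp; ring
      have := mul_nonneg hA.le (sq_nonneg (v / 2 + X / A))
      linarith
    have a2 : -(ε * A * (q * v)) ≤ A / 4 * v ^ 2 + ε * (ε * A) * q ^ 2 := by
      nlinarith [mul_nonneg hA.le (sq_nonneg (v / 2 + ε * q))]
    have a2' : ε * (ε * A) * q ^ 2 ≤ ε * (K / 8) * q ^ 2 := by gcongr
    have a3 : -(ε * (q * X)) ≤ ε * (K / 8) * q ^ 2 + 2 * ε / K * X ^ 2 := by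
      have : ε * (K / 8) * q ^ 2 + 2 * ε / K * X ^ 2 + ε * (q * X)
          = ε * (K / 8) * (q + 4 * X / K) ^ 2 := by
        field_simp; ring
      have := mul_nonneg (show 0 ≤ ε * (K / 8) by positivity) (sq_nonneg (q + 4 * X / K))
      linarith
    have a4 : ε / 2 * G + ε / 2 * (K * q ^ 2) ≤ ε * (g * q) := by
      have b1 := mul_le_mul_of_nonneg_left h1 (show 0 ≤ ε / 2 by positivity)
      have b2 := mul_le_mul_of_nonneg_left h2 (show 0 ≤ ε / 2 by positivity)
      linarith
    have a5 : ε * v ^ 2 ≤ A / 4 * v ^ 2 := by gcongr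
    have a6 : ε / 2 * (ε * (q * v)) ≤ ε / 2 * (ε * ((q ^ 2 + v ^ 2) / 2)) := by gcongr
    have a7 : ε * (ε * q ^ 2) ≤ ε * (K / 4 * q ^ 2) := by gcongr
    have a8 : ε * (ε * v ^ 2) ≤ 1 / 2 * (A / 4 * v ^ 2) := by gcongr
    have a9 : 0 ≤ A * v ^ 2 := by positivity
    have a10 : 0 ≤ ε * K * q ^ 2 := by positivity
    nlinarith
  · have b1 : min 1 K * v ^ 2 ≤ 1 * v ^ 2 := by gcongr; exact min_le_left _ _
    have b2 : min 1 K * q ^ 2 ≤ K * q ^ 2 := by gcongr; exact min_le_right _ _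
    have b3 : ε ≤ min 1 K / 2 := by
      rcases min_choice 1 K with h | h <;> rw [h] <;> linarith
    have b4 : -(ε * (q * v)) ≤ min 1 K / 2 * ((q ^ 2 + v ^ 2) / 2) := by
      have : ε * (-(q * v)) ≤ ε * ((q ^ 2 + v ^ 2) / 2) := mul_le_mul_of_nonneg_left hqv2 hε.le
      have h5 : ε * ((q ^ 2 + v ^ 2) / 2) ≤ min 1 K / 2 * ((q ^ 2 + v ^ 2) / 2) := by gcongr
      linarith
    linarith

lemma asymp {A K α lam C : ℝ} (hA : 0 < A) (hK : 0 < K) (hα : 1 < α) (hl : 0 < lam)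
    {ψ v : ℝ → ℝ} (hpos : ∀ t, 0 < ψ t)
    (hd : ∀ t, HasDerivAt ψ (v t) t ∧
        HasDerivAt v (-A * v t - gK K α (ψ t) - C * Real.exp (lam * t)) t)
    {m M T1 : ℝ} (hm : 0 < m) (hmM : ∀ t ≤ T1, ψ t ∈ Icc m M) :
    ∃ Q : ℝ, 0 ≤ Q ∧ ∀ t ≤ T1, (ψ t - 1) ^ 2 + v t ^ 2 ≤ Q * Real.exp (2 * lam * t) := by
  obtain ⟨Bg, hBg⟩ : ∃ B, ∀ x ∈ Icc m M, ‖gK K α x‖ ≤ B :=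
    isCompact_Icc.exists_bound_of_continuousOn fun x hx =>
      (gK_hasStrictDerivAt (hm.trans_le hx.1)).hasDerivAt.continuousAt.continuousWithinAt
  obtain ⟨BG, hBG⟩ : ∃ B, ∀ x ∈ Icc m M, ‖G0 K α x‖ ≤ B :=
    isCompact_Icc.exists_bound_of_continuousOn fun x hx =>
      (G0_hasDerivAt hα (hm.trans_le hx.1)).continuousAt.continuousWithinAt
  obtain ⟨B, hBd⟩ : ∃ B, B = Bg + |C| * Real.exp (lam * T1) := ⟨_, rfl⟩
  have hf : ∀ t ≤ T1, |-gK K α (ψ t) - C * Real.exp (lam * t)| ≤ B := by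
    intro t ht
    have h1 := hBg _ (hmM t ht)
    have h2 := abs_sub (-gK K α (ψ t)) (C * Real.exp (lam * t))
    rw [abs_neg, abs_mul, Real.abs_exp] at h2
    have h3 : Real.exp (lam * t) ≤ Real.exp (lam * T1) :=
      Real.exp_le_exp.2 (mul_le_mul_of_nonneg_left ht hl.le)
    have h4 := mul_le_mul_of_nonneg_left h3 (abs_nonneg C)
    rw [Real.norm_eq_abs] at h1
    linarith
  have hB0 : 0 ≤ B := (abs_nonneg _).trans (hf T1 le_rfl)
  have hψM : ∀ t ≤ T1, |ψ t| ≤ M := fun t ht => by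
    rw [abs_of_pos (hpos t)]; exact (hmM t ht).2
  have hM0 : 0 ≤ M := (abs_nonneg _).trans (hψM T1 le_rfl)
  have hv1 : ∀ t ≤ T1, v t ≤ B / A := fun t ht =>
    slope_bound (u := ψ) (f := fun t => -gK K α (ψ t) - C * Real.exp (lam * t)) hA hB0
      (fun t => (hd t).1) (fun t => (hd t).2.congr_deriv (by ring))
      (fun s hs => hf s (hs.trans ht)) (fun s hs => hψM s (hs.trans ht))
  have hv2 : ∀ t ≤ T1, -v t ≤ B / A := fun t ht =>
    slope_bound (u := fun t => -ψ t) (w := fun t => -v t)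
      (f := fun t => -(-gK K α (ψ t) - C * Real.exp (lam * t))) hA hB0
      (fun t => (hd t).1.neg) (fun t => (hd t).2.neg.congr_deriv (by ring))
      (fun s hs => by rw [abs_neg]; exact hf s (hs.trans ht))
      (fun s hs => by rw [abs_neg]; exact hψM s (hs.trans ht))
  have hv : ∀ t ≤ T1, |v t| ≤ B / A := fun t ht =>
    abs_le.2 ⟨by linarith [hv2 t ht], hv1 t ht⟩
  obtain ⟨ε, c, R, c2, hε, hc, hR, hc2, halg⟩ := alg_lyap2 hA hK
  obtain ⟨S, hS⟩ : ∃ S, S = R * C ^ 2 / (2 * lam + c) := ⟨_, rfl⟩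
  have hS0 : 0 ≤ S := by rw [hS]; positivity
  have hSe : S * (2 * lam + c) = R * C ^ 2 := by rw [hS]; field_simp
  have hle : ∀ t, v t * (-A * v t - gK K α (ψ t) - C * Real.exp (lam * t)) + gK K α (ψ t) * v t
      + ε * (v t * v t + (ψ t - 1) * (-A * v t - gK K α (ψ t) - C * Real.exp (lam * t)))
        ≤ -c * (v t ^ 2 / 2 + G0 K α (ψ t) + ε * ((ψ t - 1) * v t))
          + R * (C * Real.exp (lam * t)) ^ 2 ∧
      c2 * ((ψ t - 1) ^ 2 + v t ^ 2) ≤ v t ^ 2 / 2 + G0 K α (ψ t) + ε * ((ψ t - 1) * v t) :=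
    fun t => halg _ _ _ _ _ (gK_mono hK hα (hpos t)) (G0_le hK hα (hpos t)) (G0_ge hK hα (hpos t))
  obtain ⟨U, hU⟩ : ∃ U : ℝ → ℝ, U = fun t => v t ^ 2 / 2 + G0 K α (ψ t) + ε * ((ψ t - 1) * v t)
      - S * Real.exp (2 * lam * t) := ⟨_, rfl⟩
  have hUd : ∀ t, HasDerivAt U (v t * (-A * v t - gK K α (ψ t) - C * Real.exp (lam * t))
      + gK K α (ψ t) * v t
      + ε * (v t * v t + (ψ t - 1) * (-A * v t - gK K α (ψ t) - C * Real.exp (lam * t)))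
      - S * (2 * lam * Real.exp (2 * lam * t))) t := by
    intro t
    obtain ⟨h1, h2⟩ := hd t
    have h3 := (G0_hasDerivAt (K := K) hα (hpos t)).comp t h1
    rw [hU]
    refine (((((h2.pow 2).div_const 2).add h3).add
      (((h1.sub_const 1).mul h2).const_mul ε)).sub
      ((hasDerivAt_exp_mul (2 * lam) t).const_mul S)).congr_deriv ?_
    simp only [Nat.cast_ofNat]
    ring
  have hUineq : ∀ t, v t * (-A * v t - gK K α (ψ t) - C * Real.exp (lam * t))
      + gK K α (ψ t) * v t
      + ε * (v t * v t + (ψ t - 1) * (-A * v t - gK K α (ψ t) - C * Real.exp (lam * t)))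
      - S * (2 * lam * Real.exp (2 * lam * t)) ≤ -c * U t := by
    intro t
    have h1 := (hle t).1
    have e : (C * Real.exp (lam * t)) ^ 2 = C ^ 2 * Real.exp (2 * lam * t) := by
      rw [mul_pow, ← Real.exp_nat_mul]; congr 2; push_cast; ring
    have e2 : R * (C * Real.exp (lam * t)) ^ 2
        = S * (2 * lam + c) * Real.exp (2 * lam * t) := by rw [e, hSe]; ring
    rw [e2] at h1
    simp only [hU]
    linarith
  obtain ⟨VB, hVB⟩ : ∃ VB, VB = (B / A) ^ 2 / 2 + BG + ε * ((M + 1) * (B / A)) := ⟨_, rfl⟩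
  have hUb : ∀ t ≤ T1, U t ≤ VB := by
    intro t ht
    have h1 : v t ^ 2 ≤ (B / A) ^ 2 := sq_le_sq' (by linarith [hv2 t ht]) (hv1 t ht)
    have h2 := (le_abs_self _).trans (hBG _ (hmM t ht))
    have h3 : (ψ t - 1) * v t ≤ (M + 1) * (B / A) := by
      refine (le_abs_self _).trans ?_
      rw [abs_mul]
      refine mul_le_mul ?_ (hv t ht) (abs_nonneg _) (by linarith)
      exact abs_le.2 ⟨by linarith [hpos t], by linarith [(hmM t ht).2]⟩
    have h4 := mul_le_mul_of_nonneg_left h3 hε.le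
    have h5 := mul_nonneg hS0 (Real.exp_pos (2 * lam * t)).le
    simp only [hU]
    linarith
  have hU0 : ∀ t ≤ T1, U t ≤ 0 := by
    intro t ht
    have h1 : ∀ a ≤ t, U t ≤ Real.exp (-c * (t - a)) * VB := by
      intro a ha
      have := gron_simple (a := a) (b := t) (κ := -c) (V := U)
        (fun s _ => (hUd s).continuousAt.continuousWithinAt) (fun s _ => hUd s)
        (fun s _ => hUineq s) t ⟨ha, le_rfl⟩
      exact this.trans (mul_le_mul_of_nonneg_left (hUb a (ha.trans ht)) (Real.exp_pos _).le)
    have h2 : Tendsto (fun a => Real.exp (-c * (t - a)) * VB) atBot (𝓝 0) := by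
      have h3 : Tendsto (fun a : ℝ => c * a + -c * t) atBot atBot :=
        tendsto_atBot_add_const_right _ _ (tendsto_id.const_mul_atBot hc)
      have h4 := (Real.tendsto_exp_atBot.comp h3).mul_const VB
      rw [zero_mul] at h4
      refine h4.congr fun a => ?_
      simp only [Function.comp]
      congr 2; ring
    refine ge_of_tendsto h2 ?_
    filter_upwards [eventually_le_atBot t] with a ha
    exact h1 a ha
  refine ⟨S / c2, by positivity, fun t ht => ?_⟩
  have h1 := (hle t).2
  have h2 := hU0 t ht
  simp only [hU] at h2
  rw [div_mul_eq_mul_div, le_div_iff₀ hc2]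
  linarith

lemma unique_profile {A K α lam C : ℝ} (hA : 0 < A) (hK : 0 < K) (hα : 1 < α) (hl : 0 < lam)
    {ψ v ψ' v' : ℝ → ℝ} (hpos : ∀ t, 0 < ψ t) (hpos' : ∀ t, 0 < ψ' t)
    (hd : ∀ t, HasDerivAt ψ (v t) t ∧
        HasDerivAt v (-A * v t - gK K α (ψ t) - C * Real.exp (lam * t)) t)
    (hd' : ∀ t, HasDerivAt ψ' (v' t) t ∧
        HasDerivAt v' (-A * v' t - gK K α (ψ' t) - C * Real.exp (lam * t)) t)
    (hb : ∃ m M : ℝ, 0 < m ∧ ∀ᶠ t in atBot, ψ t ∈ Icc m M)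
    (hb' : ∃ m M : ℝ, 0 < m ∧ ∀ᶠ t in atBot, ψ' t ∈ Icc m M) : ψ = ψ' := by
  obtain ⟨m, M, hm, h1⟩ := hb
  obtain ⟨m', M', hm', h1'⟩ := hb'
  obtain ⟨T1, hT1⟩ := eventually_atBot.1 h1
  obtain ⟨T1', hT1'⟩ := eventually_atBot.1 h1'
  obtain ⟨Q, hQ0, hQ⟩ := asymp hA hK hα hl hpos hd hm hT1
  obtain ⟨Q', hQ0', hQ'⟩ := asymp hA hK hα hl hpos' hd' hm' hT1'
  obtain ⟨δ, hδ, hδ1, hst⟩ := stability lam C hA hK hα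
  obtain ⟨T2, hT2⟩ := exp_small (c := Q) hl (show 0 < δ ^ 2 by positivity)
  obtain ⟨T3, hT3⟩ := exp_small (c := Q') hl (show 0 < δ ^ 2 by positivity)
  obtain ⟨T0, a1, a2, a3, a4⟩ : ∃ T0, T0 ≤ T1 ∧ T0 ≤ T1' ∧ T0 ≤ T2 ∧ T0 ≤ T3 :=
    ⟨min (min T1 T1') (min T2 T3), (min_le_left _ _).trans (min_le_left _ _),
      (min_le_left _ _).trans (min_le_right _ _), (min_le_right _ _).trans (min_le_left _ _),
      (min_le_right _ _).trans (min_le_right _ _)⟩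
  have near : ∀ t ≤ T0, |ψ t - 1| ≤ δ := fun t ht => by
    refine abs_le_of_sq_le_sq ?_ hδ.le
    nlinarith [hQ t (ht.trans a1), hT2 t (ht.trans a3), sq_nonneg (v t)]
  have near' : ∀ t ≤ T0, |ψ' t - 1| ≤ δ := fun t ht => by
    refine abs_le_of_sq_le_sq ?_ hδ.le
    nlinarith [hQ' t (ht.trans a2), hT3 t (ht.trans a4), sq_nonneg (v' t)]
  have low : ∀ (f g : ℝ → ℝ) (T : ℝ), T0 ≤ T → (∀ t, 0 < f t) → (∀ t, HasDerivAt f (g t) t) →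
      (∀ t ≤ T0, |f t - 1| ≤ δ) → ∃ μ, 0 < μ ∧ ∀ t ≤ T, μ ≤ f t := by
    intro f g T hT hf hg hn
    obtain ⟨x, hx, hxm⟩ := isCompact_Icc.exists_isMinOn (nonempty_Icc.2 hT)
      (fun t _ => (hg t).continuousAt.continuousWithinAt : ContinuousOn f (Icc T0 T))
    refine ⟨min (f x) (1 - δ), lt_min (hf x) (by linarith), fun t ht => ?_⟩
    rcases le_total t T0 with h | h
    · exact (min_le_right _ _).trans (by linarith [(abs_le.1 (hn t h)).1])
    · exact (min_le_left _ _).trans (hxm ⟨h, ht⟩)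
  funext t
  obtain ⟨μ, hμ, hμt⟩ := low ψ v (max t T0) (le_max_right _ _) hpos (fun t => (hd t).1) near
  obtain ⟨μ', hμ', hμt'⟩ := low ψ' v' (max t T0) (le_max_right _ _) hpos' (fun t => (hd' t).1) near'
  obtain ⟨B, hB, hst'⟩ := hst (min μ μ') (lt_min hμ hμ') T0 (max t T0) (le_max_right _ _)
  have hS : ∀ a, Sol A K α lam C a (max t T0) ψ v := fun a =>
    ⟨fun s _ => (hd s).1.continuousAt.continuousWithinAt,
      fun s _ => (hd s).2.continuousAt.continuousWithinAt, fun s _ => hpos s, fun s _ => hd s⟩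
  have hS' : ∀ a, Sol A K α lam C a (max t T0) ψ' v' := fun a =>
    ⟨fun s _ => (hd' s).1.continuousAt.continuousWithinAt,
      fun s _ => (hd' s).2.continuousAt.continuousWithinAt, fun s _ => hpos' s, fun s _ => hd' s⟩
  have hW : ∀ a ≤ min t T0, (ψ t - ψ' t) ^ 2 ≤ B * (2 * Q + 2 * Q') * Real.exp (2 * lam * a) := by
    intro a ha
    have ha1 : a ≤ t := ha.trans (min_le_left _ _)
    have ha2 : a ≤ T0 := ha.trans (min_le_right _ _)
    have h2 := hst' a ha2 ψ v ψ' v' (hS a) (hS' a) (fun s hs => near s hs.2)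
      (fun s hs => near' s hs.2) (fun s hs => (min_le_left _ _).trans (hμt s hs.2))
      (fun s hs => (min_le_right _ _).trans (hμt' s hs.2)) t ⟨ha1, le_max_left _ _⟩
    have h3 := hQ a (ha2.trans a1)
    have h4 := hQ' a (ha2.trans a2)
    have h5 : (ψ a - ψ' a) ^ 2 + (v a - v' a) ^ 2
        ≤ (2 * Q + 2 * Q') * Real.exp (2 * lam * a) := by
      nlinarith [sq_nonneg ((ψ a - 1) + (ψ' a - 1)), sq_nonneg (v a + v' a)]
    have h6 := mul_le_mul_of_nonneg_left h5 hB
    nlinarith [sq_nonneg (v t - v' t)]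
  have h0 : (ψ t - ψ' t) ^ 2 ≤ 0 := by
    have h1 : Tendsto (fun t : ℝ => 2 * lam * t) atBot atBot :=
      tendsto_id.const_mul_atBot (by positivity)
    have h2 := (Real.tendsto_exp_atBot.comp h1).const_mul (B * (2 * Q + 2 * Q'))
    rw [mul_zero] at h2
    refine ge_of_tendsto h2 ?_
    filter_upwards [eventually_le_atBot (min t T0)] with a ha
    exact hW a ha
  have := pow_eq_zero_iff (two_ne_zero) |>.1 (le_antisymm h0 (sq_nonneg _))
  linarith

/-- From a profile to a solution of the reversed system. -/
lemma reverse_sol {A K α lam C : ℝ} {φ : ℝ → ℝ} (hφ : ContDiff ℝ 2 φ)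
    (hode : ∀ t : ℝ, deriv (deriv φ) t - A * deriv φ t + K * (φ t - φ t ^ (-α))
        + C * Real.exp (-lam * t) = 0) :
    ∀ t, HasDerivAt (fun t => φ (-t)) ((fun t => -deriv φ (-t)) t) t ∧
        HasDerivAt (fun t => -deriv φ (-t)) (-A * (-deriv φ (-t)) - gK K α (φ (-t))
          - C * Real.exp (lam * t)) t := by
  intro t
  have h1 : Differentiable ℝ φ := hφ.differentiable (by norm_num)
  have h2 : Differentiable ℝ (deriv φ) := by
    have : ContDiff ℝ (1 + 1) φ := by
      convert hφ using 1
      norm_num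
    exact (contDiff_succ_iff_deriv.1 this).2.2.differentiable (by norm_num)
  have d1 := (h1 (-t)).hasDerivAt.scomp t (hasDerivAt_neg t)
  have d2 := ((h2 (-t)).hasDerivAt.scomp t (hasDerivAt_neg t)).neg
  refine ⟨d1.congr_deriv (by simp), d2.congr_deriv ?_⟩
  have := hode (-t)
  have e : -lam * -t = lam * t := by ring
  rw [e] at this
  simp only [smul_eq_mul, gK]
  linarith

theorem unique_normalized_profile
    (N : ℕ) (hN : 2 ≤ N) (α p : ℝ) (hα : 1 < α) (hp : 0 < p)
    (A cstar C : ℝ)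
    (hA : A = (N : ℝ) - 2 + 4 / (α + 1))
    (hcstar : cstar = (2 * α / (α + 1) * ((N : ℝ) - 2 + 2 / (α + 1))) ^ (-(1 / (α + 1))))
    (hC : C = p / cstar) :
    ∃! φ : ℝ → ℝ, (∀ t : ℝ, 0 < φ t) ∧ ContDiff ℝ 2 φ ∧
      (∀ t : ℝ, deriv (deriv φ) t - A * deriv φ t
        + 2 / (α + 1) * ((N : ℝ) - 2 + 2 / (α + 1)) * (φ t - φ t ^ (-α))
        + C * Real.exp (-(2 * α / (α + 1)) * t) = 0) ∧
      (∃ m M : ℝ, 0 < m ∧ ∀ᶠ t in atTop, φ t ∈ Icc m M) := by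
  have hN' : (0 : ℝ) ≤ (N : ℝ) - 2 := by
    have : (2 : ℝ) ≤ N := by exact_mod_cast hN
    linarith
  have hA0 : 0 < A := by rw [hA]; positivity
  have hK0 : 0 < 2 / (α + 1) * ((N : ℝ) - 2 + 2 / (α + 1)) := by positivity
  have hl0 : 0 < 2 * α / (α + 1) := by positivity
  generalize 2 / (α + 1) * ((N : ℝ) - 2 + 2 / (α + 1)) = K at hK0 ⊢
  generalize 2 * α / (α + 1) = lam at hl0 ⊢
  obtain ⟨ψ, v, hpos, hd, hbd⟩ := exists_profile C hA0 hK0 hα hl0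
  have dφ : ∀ t, HasDerivAt (fun t => ψ (-t)) (-v (-t)) t := fun t =>
    ((hd (-t)).1.scomp t (hasDerivAt_neg t)).congr_deriv (by simp)
  have dv : ∀ t, HasDerivAt (fun t => -v (-t))
      (-A * v (-t) - gK K α (ψ (-t)) - C * Real.exp (lam * (-t))) t := fun t =>
    ((hd (-t)).2.scomp t (hasDerivAt_neg t)).neg.congr_deriv (by simp only [smul_eq_mul]; ring)
  have e1 : deriv (fun t => ψ (-t)) = fun t => -v (-t) := funext fun t => (dφ t).deriv
  have hψ2 : ∃ m M : ℝ, 0 < m ∧ ∀ᶠ t in atBot, ψ t ∈ Icc m M := by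
    obtain ⟨T0, hT0⟩ := exp_small (c := C ^ 2 / (8 * A * lam)) hl0
      (show 0 < K / 2 * (1 / 2) ^ 2 by positivity)
    refine ⟨1 / 2, 3 / 2, by norm_num, ?_⟩
    filter_upwards [eventually_le_atBot T0] with t ht
    have h1 : (ψ t - 1) ^ 2 ≤ (1 / 2) ^ 2 :=
      le_of_mul_le_mul_left ((hbd t).trans (hT0 t ht)) (by positivity)
    have h2 := abs_le.1 (abs_le_of_sq_le_sq h1 (by norm_num))
    exact ⟨by linarith [h2.1], by linarith [h2.2]⟩
  refine ⟨fun t => ψ (-t), ⟨fun t => hpos _, ?_, ?_, ?_⟩, ?_⟩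
  · have hcψ : Continuous ψ := continuous_iff_continuousAt.2 fun t => (hd t).1.continuousAt
    have hcv : Continuous v := continuous_iff_continuousAt.2 fun t => (hd t).2.continuousAt
    have hcg : Continuous fun t => gK K α (ψ (-t)) := continuous_iff_continuousAt.2 fun t =>
      (gK_hasStrictDerivAt (hpos (-t))).hasDerivAt.continuousAt.comp
        (f := fun t => ψ (-t)) (dφ t).continuousAt
    have e2 : deriv (fun t => -v (-t)) = fun t =>
        -A * v (-t) - gK K α (ψ (-t)) - C * Real.exp (lam * (-t)) := funext fun t => (dv t).deriv
    have h1 : ContDiff ℝ 1 (fun t => -v (-t)) := by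
      rw [contDiff_one_iff_deriv]
      refine ⟨fun t => (dv t).differentiableAt, ?_⟩
      rw [e2]
      fun_prop
    have h2 : ContDiff ℝ (1 + 1) (fun t => ψ (-t)) := by
      rw [contDiff_succ_iff_deriv]
      refine ⟨fun t => (dφ t).differentiableAt, by simp, ?_⟩
      rw [e1]; exact h1
    convert h2 using 1
    norm_num
  · intro t
    rw [e1, (dv t).deriv]
    have e : -lam * t = lam * -t := by ring
    rw [e]
    simp only [gK]
    ring
  · obtain ⟨m, M, hm, h⟩ := hψ2
    exact ⟨m, M, hm, tendsto_neg_atTop_atBot.eventually h⟩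
  · rintro φ ⟨hφp, hφ, hode, m, M, hm, hmM⟩
    have hr := reverse_sol hφ hode
    have := unique_profile hA0 hK0 hα hl0 (fun t => hφp (-t)) hpos hr hd
      ⟨m, M, hm, tendsto_neg_atBot_atTop.eventually hmM⟩ hψ2
    funext t
    have h := congrFun this (-t)
    simpa using h
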